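/- Let G be a group acting on ℝ such that for every g ∈ G the map t ↦ g·t is a strictly increasing bijection of ℝ. Define m : G → ℝ by m(g) = 1 if g·0 > 0 and m(g) = 0 otherwise. Then for all g, h ∈ G with h·0 ≠ 0, one has m(g⁻¹)·m(g⁻¹h) = m(h)·m(g⁻¹) + m(h⁻¹)·m(g⁻¹h). -/

import Mathlib

/-!
Since `g` acts by an increasing bijection, `x < g⁻¹ • y` is equivalent to `g • x < y`. Writing
`a = g • x₀` and `b = h • x₀`, every value of `m` in the identity thus becomes the truth value of
a comparison between two of `a`, `b`, `x₀`. The left-hand side is the indicator of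
`a < min x₀ b`, and the two terms on the right are its restrictions to `x₀ < b` and `b < x₀`.
-/

section LinearOrder

variable {X R : Type*} [LinearOrder X]

theorem lt_inv_smul_iff_smul_lt_of_strictMono {G : Type*} [Group G] [MulAction G X] {g : G}
    (hg : StrictMono (fun t : X => g • t)) {x y : X} : x < g⁻¹ • y ↔ g • x < y := by
  simpa only [smul_inv_smul] using (hg.lt_iff_lt (a := x) (b := g⁻¹ • y)).symm

theorem ite_lt_mul_ite_lt_eq_ite_lt_min [MulZeroOneClass R] (a b c : X) :
    (if a < b then 1 else 0 : R) * (if a < c then 1 else 0) = if a < min b c then 1 else 0 := by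
  simp only [ite_zero_mul_ite_zero, mul_one, lt_min_iff]

variable [NonAssocSemiring R]

theorem ite_lt_min_eq_add_of_ne (a : X) {b c : X} (hbc : b ≠ c) :
    (if a < min b c then 1 else 0 : R) =
      (if b < c then 1 else 0) * (if a < b then 1 else 0) +
        (if c < b then 1 else 0) * (if a < c then 1 else 0) := by
  rcases hbc.lt_or_gt with h | h
  · simp [min_eq_left h.le, h, h.not_gt]
  · simp [min_eq_right h.le, h, h.not_gt]

theorem stmt_7_general {G : Type*} [Group G] [MulAction G X]
    (hmono : ∀ g : G, StrictMono (fun t : X => g • t)) (x₀ : X) (m : G → R)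
    (hm : ∀ g : G, m g = if x₀ < g • x₀ then 1 else 0) (g h : G) (hh : h • x₀ ≠ x₀) :
    m g⁻¹ * m (g⁻¹ * h) = m h * m g⁻¹ + m h⁻¹ * m (g⁻¹ * h) := by
  have hm_inv (k : G) : m k⁻¹ = if k • x₀ < x₀ then 1 else 0 := by
    simp only [hm, lt_inv_smul_iff_smul_lt_of_strictMono (hmono k)]
  have hm_inv_mul : m (g⁻¹ * h) = if g • x₀ < h • x₀ then 1 else 0 := by
    simp only [hm, mul_smul, lt_inv_smul_iff_smul_lt_of_strictMono (hmono g)]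
  rw [hm_inv g, hm_inv h, hm_inv_mul, hm h, ite_lt_mul_ite_lt_eq_ite_lt_min]
  exact ite_lt_min_eq_add_of_ne (g • x₀) hh.symm

end LinearOrder

/-- Combinatorial core of the Cotlar-type identity: if a group `G` acts on `ℝ` by strictly
increasing bijections and `m` is the indicator of `{g : g • 0 > 0}`, then for `h • 0 ≠ 0`
one has `m(g⁻¹) m(g⁻¹h) = m(h) m(g⁻¹) + m(h⁻¹) m(g⁻¹h)`. -/
theorem stmt_7 (G : Type*) [Group G] [MulAction G ℝ]
    (hmono : ∀ g : G, StrictMono (fun t : ℝ => g • t))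
    (m : G → ℝ)
    (hm : ∀ g : G, m g = if 0 < g • (0 : ℝ) then 1 else 0) :
    ∀ g h : G, h • (0 : ℝ) ≠ 0 →
      m g⁻¹ * m (g⁻¹ * h) = m h * m g⁻¹ + m h⁻¹ * m (g⁻¹ * h) :=
  stmt_7_general hmono 0 m hm
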